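/- Let n, k be positive integers with n ≥ 2k. The function W := T^O(·; n) * Wg^U(·; n) on S_{2k} is H_k-biinvariant and satisfies T^O(·; n+1) ⋆ W = 1_k; consequently W coincides with the orthogonal Weingarten function Wg^O(·; n+1). -/

import Mathlib

/-!
The proof works with the Jucys–Murphy elements `J_b = ∑_{a < b} (a b)` (`b = 0, …, 2k - 1`), which
act on functions on `S_{2k}` by left convolution and commute with one another.

Both kernels are products of shifted Jucys–Murphy elements:
`T^U(·; n) = ∏_{j < 2k} (n + J_j) · δ` (`dprod_deltaId`) and
`T^O(·; n) = ∏_{j < k} (n + J_{2j}) · 1_H` (`dprod_oneH`). These are proved one factor at a time: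
`n ^ cyc σ` and `n ^ c(σ)` count colourings with `n` colours that are constant on the cycles of `σ`,
respectively on the components of `Γ(σ)`, and splitting off a point (or a standard pair) multiplies
this number by `n` (`colU_swap`, `colO_swap`).

On the indicator of `H_k` one has `J_{2j+1} · 1_H = (J_{2j} + 1) · 1_H` (`jm_odd_oneH`), because
`(a, 2j+1)` and `(a', 2j)`, with `a'` the partner of `a`, differ by an element of `H_k`.
As the `J_b` commute, `∏_{j < 2k} (n + J_j) · 1_H` is therefore equal to
`∏_{j < k} (n + J_{2j}) (n + 1 + J_{2j}) · 1_H`, which amounts to the identity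
`T^O(·; n) * T^O(·; n+1) = |H_k| T^U(·; n) * 1_H` (`TO_conv_TO`).

Since `M_{2k}` is a transversal of `S_{2k} / H_k`, the reduced convolution is the full one divided by
`|H_k|` (`conv_eq_sconv`). Evaluating `T^O(·; n) * T^O(·; n+1) * Wg^O` in two ways then gives
`T^O(·; n) = T^U(·; n) * Wg^O`, and as `T^U` is central, `T^O(·; n) * Wg^U = Wg^O`. The
biinvariance of `W` and the equation `T^O(·; n+1) ⋆ W = 1_k` are then those of `Wg^O`.
-/

/-!
Weingarten calculus for classical compact Lie groups and compact symmetric spaces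
(S. Matsumoto, "Weingarten calculus for matrix ensembles associated with compact
symmetric spaces"): common definitions.

We index `{1,…,m}` by `Fin m` (0-indexed), so the pair `{2r-1, 2r}` becomes
`{2r, 2r+1}` for `r ∈ Fin k`.
-/

open MeasureTheory Finset Matrix

namespace WgPaper

/-- `lo r` is the (0-indexed) point `2r`, i.e. `2r - 1` in 1-indexed notation. -/
def lo {k : ℕ} (i : Fin k) : Fin (2 * k) := ⟨2 * (i : ℕ), by have := i.isLt; omega⟩

/-- `hi r` is the (0-indexed) point `2r + 1`, i.e. `2r` in 1-indexed notation. -/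
def hi {k : ℕ} (i : Fin k) : Fin (2 * k) := ⟨2 * (i : ℕ) + 1, by have := i.isLt; omega⟩

/-- Number of cycles of a permutation, counting fixed points as 1-cycles. -/
def cyc {m : ℕ} (σ : Equiv.Perm (Fin m)) : ℕ :=
  Multiset.card σ.cycleType + (Finset.univ.filter fun x => σ x = x).card

/-- Number of even-length cycles of a permutation. -/
def evenCycles {m : ℕ} (σ : Equiv.Perm (Fin m)) : ℕ :=
  Multiset.card (σ.cycleType.filter fun d => d % 2 = 0)

/-- Number of odd-length cycles of a permutation, counting fixed points as 1-cycles. -/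
def oddCycles {m : ℕ} (σ : Equiv.Perm (Fin m)) : ℕ :=
  Multiset.card (σ.cycleType.filter fun d => d % 2 = 1)
    + (Finset.univ.filter fun x => σ x = x).card

/-- The sign `ε(σ)` of a permutation, as an element of a commutative ring. -/
def sgn (R : Type*) [CommRing R] {m : ℕ} (σ : Equiv.Perm (Fin m)) : R :=
  ((Equiv.Perm.sign σ : ℤ) : R)

/-- Full convolution on a finite group: `(f * g)(σ) = ∑_τ f(τ) g(τ⁻¹ σ)`. -/
def conv {G : Type*} [Group G] [Fintype G] {R : Type*} [CommRing R] (f g : G → R) : G → R :=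
  fun σ => ∑ τ : G, f τ * g (τ⁻¹ * σ)

/-- The Dirac function at the identity permutation. -/
def deltaId {m : ℕ} {R : Type*} [CommRing R] : Equiv.Perm (Fin m) → R :=
  fun σ => if σ = 1 then 1 else 0

/-- The graph `Γ(σ)` on `{1,…,2k}` whose edges are `{2r-1, 2r}` and `{σ(2r-1), σ(2r)}`
(in 1-indexed notation) for `1 ≤ r ≤ k`. -/
def Gamma {k : ℕ} (σ : Equiv.Perm (Fin (2 * k))) : SimpleGraph (Fin (2 * k)) :=
  SimpleGraph.fromRel fun a b =>
    (∃ r : Fin k, a = lo r ∧ b = hi r) ∨ ∃ r : Fin k, a = σ (lo r) ∧ b = σ (hi r)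

/-- `c(σ)`, the number of connected components of `Γ(σ)`. -/
noncomputable def ccount {k : ℕ} (σ : Equiv.Perm (Fin (2 * k))) : ℕ :=
  Nat.card (Gamma σ).ConnectedComponent

/-- The number of vertices of a connected component of a graph. -/
noncomputable def compSize {V : Type*} {G : SimpleGraph V} (C : G.ConnectedComponent) : ℕ :=
  Nat.card {v // G.connectedComponentMk v = C}

/-- `ℓe(σ)`: the number of connected components of `Γ(σ)` whose size is `≡ 0 (mod 4)`. -/
noncomputable def ecomp {k : ℕ} (σ : Equiv.Perm (Fin (2 * k))) : ℕ :=
  Nat.card {C : (Gamma σ).ConnectedComponent // compSize C % 4 = 0}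

/-- `ℓo(σ)`: the number of connected components of `Γ(σ)` whose size is `≡ 2 (mod 4)`. -/
noncomputable def ocomp {k : ℕ} (σ : Equiv.Perm (Fin (2 * k))) : ℕ :=
  Nat.card {C : (Gamma σ).ConnectedComponent // compSize C % 4 = 2}

/-- Membership in the hyperoctahedral subgroup `H_k ≤ S_{2k}`: each pair
`{2i-1, 2i}` is mapped onto some pair `{2j-1, 2j}`. -/
def IsHyper {k : ℕ} (ζ : Equiv.Perm (Fin (2 * k))) : Prop :=
  ∀ i : Fin k, ∃ j : Fin k, ({ζ (lo i), ζ (hi i)} : Finset (Fin (2 * k))) = {lo j, hi j}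

/-- The defining property of the set `M_{2k}` of coset representatives of `S_{2k}/H_k`:
`σ(2i-1) < σ(2i)` for all `i` and `σ(1) < σ(3) < ⋯ < σ(2k-1)`. -/
def MProp {k : ℕ} (σ : Equiv.Perm (Fin (2 * k))) : Prop :=
  (∀ i : Fin k, σ (lo i) < σ (hi i)) ∧ ∀ i j : Fin k, i < j → σ (lo i) < σ (lo j)

open scoped Classical in
/-- The set `M_{2k}` of coset representatives of `S_{2k}/H_k`, as a `Finset`. -/
noncomputable def Mset (k : ℕ) : Finset (Equiv.Perm (Fin (2 * k))) :=
  Finset.univ.filter MProp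

/-- Reduced convolution: `(f ⋆ g)(σ) = ∑_{τ ∈ M_{2k}} f(τ) g(τ⁻¹ σ)`. -/
noncomputable def sconv {k : ℕ} {R : Type*} [CommRing R]
    (f g : Equiv.Perm (Fin (2 * k)) → R) : Equiv.Perm (Fin (2 * k)) → R :=
  fun σ => ∑ τ ∈ Mset k, f τ * g (τ⁻¹ * σ)

open scoped Classical in
/-- The indicator function `1_k` of `H_k`. -/
noncomputable def oneH {k : ℕ} {R : Type*} [CommRing R] : Equiv.Perm (Fin (2 * k)) → R :=
  fun σ => if IsHyper σ then 1 else 0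

open scoped Classical in
/-- The twisted indicator function `1_k^ε` of `H_k`: `σ ↦ ε(σ)` on `H_k`, `0` elsewhere. -/
noncomputable def oneHeps {k : ℕ} {R : Type*} [CommRing R] : Equiv.Perm (Fin (2 * k)) → R :=
  fun σ => if IsHyper σ then sgn R σ else 0

/-- `δ_σ(i,j) = ∏_{s=1}^k δ_{i_{σ(s)}, j_s}`. -/
def deltaP {k : ℕ} {α : Type*} [DecidableEq α] {R : Type*} [CommRing R]
    (σ : Equiv.Perm (Fin k)) (i j : Fin k → α) : R :=
  ∏ s : Fin k, if i (σ s) = j s then 1 else 0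

/-- `Δ_σ(i) = ∏_{s=1}^k δ_{i_{σ(2s-1)}, i_{σ(2s)}}`. -/
def DeltaO {k : ℕ} {α : Type*} [DecidableEq α] {R : Type*} [CommRing R]
    (σ : Equiv.Perm (Fin (2 * k))) (i : Fin (2 * k) → α) : R :=
  ∏ s : Fin k, if i (σ (lo s)) = i (σ (hi s)) then 1 else 0

/-- The standard skew-symmetric matrix `J_n = ((O, I_n), (−I_n, O))`. -/
def Jmat (R : Type*) [CommRing R] (n : ℕ) : Matrix (Fin (2 * n)) (Fin (2 * n)) R :=
  Matrix.of fun p q =>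
    if (p : ℕ) + n = (q : ℕ) then 1 else if (q : ℕ) + n = (p : ℕ) then -1 else 0

/-- `Δ'_σ(i) = ∏_{r=1}^k ⟨i_{σ(2r-1)}, i_{σ(2r)}⟩`, where `⟨p,q⟩` is the `(p,q)` entry
of `J_n`. -/
def DeltaSp {k n : ℕ} (R : Type*) [CommRing R]
    (σ : Equiv.Perm (Fin (2 * k))) (i : Fin (2 * k) → Fin (2 * n)) : R :=
  ∏ s : Fin k, Jmat R n (i (σ (lo s))) (i (σ (hi s)))

/-- The signature matrix `I'_{a,n-a} = diag(I_a, −I_{n-a})`, of size `n`. -/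
def Iab (R : Type*) [CommRing R] (n a : ℕ) : Matrix (Fin n) (Fin n) R :=
  Matrix.of fun p q => if p = q then (if (p : ℕ) < a then 1 else -1) else 0

/-- The signature matrix `I''_{a,n-a} = diag(I_a, −I_{n-a}, I_a, −I_{n-a})`, of size `2n`. -/
def Ippab (R : Type*) [CommRing R] (n a : ℕ) : Matrix (Fin (2 * n)) (Fin (2 * n)) R :=
  Matrix.of fun p q => if p = q then (if (p : ℕ) % n < a then 1 else -1) else 0

/-- The unitary group `U(n)` of `n × n` complex unitary matrices. -/
abbrev UG (n : ℕ) := Matrix.unitaryGroup (Fin n) ℂ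

/-- The real orthogonal group `O(n)`. -/
abbrev OG (n : ℕ) := Matrix.orthogonalGroup (Fin n) ℝ

noncomputable instance (n : ℕ) : MeasurableSpace (UG n) := borel _

noncomputable instance (n : ℕ) : MeasurableSpace (OG n) := borel _

/-- A `2n × 2n` unitary matrix lies in the compact symplectic group `Sp(2n)`
iff `S J Sᵀ = J`. -/
def IsSymplectic {n : ℕ} (S : UG (2 * n)) : Prop :=
  (S : Matrix (Fin (2 * n)) (Fin (2 * n)) ℂ) * Jmat ℂ n
    * (S : Matrix (Fin (2 * n)) (Fin (2 * n)) ℂ)ᵀ = Jmat ℂ n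

/-- The function `T^{D III}_n` on `S_{2k}`:
`σ ↦ ∑_p Δ_σ(p) ∏_{r=1}^k J_{p_{2r-1}, p_{2r}}`. -/
noncomputable def TDIII (n k : ℕ) : Equiv.Perm (Fin (2 * k)) → ℝ :=
  fun σ => ∑ p : Fin (2 * k) → Fin (2 * n),
    DeltaO σ p * ∏ r : Fin k, Jmat ℝ n (p (lo r)) (p (hi r))

/-- The function `T^{C I}_n` on `S_{2k}`:
`σ ↦ ∑_p Δ'_σ(p) ∏_{r=1}^k (J I'_{nn})_{p_{2r-1}, p_{2r}}`. -/
noncomputable def TCI (n k : ℕ) : Equiv.Perm (Fin (2 * k)) → ℂ :=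
  fun σ => ∑ p : Fin (2 * k) → Fin (2 * n),
    DeltaSp ℂ σ p * ∏ r : Fin k, (Jmat ℂ n * Iab ℂ (2 * n) n) (p (lo r)) (p (hi r))

open Equiv

/-! ### Counting colourings -/

/-- Recolouring: if a set `X` of colourings is closed under giving `B` a new common colour and every
member of `X` is constant on `B`, then exactly one in `n` members of `X` gives `q ∈ B` the same
colour as a point `y ∉ B`. -/
lemma card_recolor {α : Type*} [Finite α] (n : ℕ) (B : α → Prop)
    (X : (α → Fin n) → Prop) (y q : α) (hy : ¬ B y) (hq : B q)
    (hX : ∀ f g, X f → (∀ x, ¬ B x → g x = f x) → (∀ x, B x → g x = g q) → X g)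
    (hB : ∀ f, X f → ∀ x, B x → f x = f q) :
    Nat.card {f // X f} = n * Nat.card {f // X f ∧ f y = f q} := by
  classical
  let e : {f // X f} ≃ Fin n × {f // X f ∧ f y = f q} :=
    { toFun := fun f => ⟨f.1 q, fun x => if B x then f.1 y else f.1 x,
        hX _ _ f.2 (fun x hx => by simp [hx]) (fun x hx => by simp [hx, hq]), by simp [hy, hq]⟩
      invFun := fun p => ⟨fun x => if B x then p.1 else p.2.1 x,
        hX _ _ p.2.2.1 (fun x hx => by simp [hx]) (fun x hx => by simp [hx, hq])⟩
      left_inv := by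
        rintro ⟨f, hf⟩
        ext x
        by_cases hx : B x
        · simp [hx, hB f hf x hx]
        · simp [hx]
      right_inv := by
        rintro ⟨c, f, hf, hfy⟩
        ext x
        · simp [hq]
        · by_cases hx : B x
          · simp [hx, hy, hB f hf x hx, hfy]
          · simp [hx] }
  rw [Nat.card_congr e, Nat.card_prod, Nat.card_fin]

/-- The number of colourings with `n` colours that are constant on the cycles of `σ`. -/
noncomputable def colU (n : ℕ) {m : ℕ} (σ : Perm (Fin m)) : ℕ :=
  Nat.card {f : Fin m → Fin n // ∀ x, f (σ x) = f x}

lemma invariant_of_sameCycle {α β : Type*} {σ : Perm α} {f : α → β} (hf : ∀ x, f (σ x) = f x)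
    {x y : α} (h : σ.SameCycle x y) : f x = f y := by
  obtain ⟨i, rfl⟩ := h
  induction i with
  | zero => simp
  | succ i ih => rw [add_comm, _root_.zpow_one_add, Perm.mul_apply, hf, ← ih]
  | pred i ih => rw [ih, sub_eq_neg_add, _root_.zpow_add, Perm.mul_apply, ← hf ((σ ^ (-1 : ℤ)) _)]; simp

lemma colU_eq (n : ℕ) {m : ℕ} (σ : Perm (Fin m)) : colU n σ = n ^ cyc σ := by
  classical
  obtain ⟨a⟩ := Perm.Basis.nonempty σ
  have hfix : ∀ x, σ x ≠ x → σ.cycleOf x ∈ σ.cycleFactorsFinset := fun x hx => by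
    rw [Perm.cycleOf_mem_cycleFactorsFinset_iff, Perm.mem_support]; exact hx
  let e : {f : Fin m → Fin n // ∀ x, f (σ x) = f x} ≃
      (σ.cycleFactorsFinset → Fin n) × ({x // σ x = x} → Fin n) :=
    { toFun := fun f => (fun c => f.1 (a c), fun x => f.1 x)
      invFun := fun p => ⟨fun x => if h : σ x = x then p.2 ⟨x, h⟩ else p.1 ⟨σ.cycleOf x, hfix x h⟩, by
        intro x
        by_cases h : σ x = x
        · rw [h]
        · have h' : σ (σ x) ≠ σ x := fun h' => h (σ.injective h')
          have : σ.cycleOf (σ x) = σ.cycleOf x := by simp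
          simp only [h, h', dite_false, this]⟩
      left_inv := by
        rintro ⟨f, hf⟩
        ext x
        by_cases h : σ x = x
        · simp [h]
        · simp only [h, dite_false]
          rw [invariant_of_sameCycle hf (a.sameCycle (hfix x h))]
      right_inv := by
        rintro ⟨u, v⟩
        ext c
        · have h : σ (a c) ≠ a c := by
            have := Perm.Basis.mem_support_self a c
            exact Perm.mem_support.1 (Perm.mem_cycleFactorsFinset_support_le c.2 this)
          simp [h, Perm.Basis.cycleOf_eq a c]
        · simp [c.2] }
  rw [colU, Nat.card_congr e, Nat.card_prod, Nat.card_fun, Nat.card_fun, Nat.card_fin, ← pow_add, cyc]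
  congr 2
  · rw [Perm.cycleType_def]; simp
  · rw [Nat.card_eq_fintype_card, Fintype.card_subtype]

lemma colU_conj (n : ℕ) {m : ℕ} (σ g : Perm (Fin m)) : colU n (g * σ * g⁻¹) = colU n σ := by
  refine Nat.card_congr ((Equiv.arrowCongr g.symm (Equiv.refl _)).subtypeEquiv fun f => ?_)
  simp only [Equiv.arrowCongr_apply, Function.comp, Equiv.refl_apply]
  refine ⟨fun h x => ?_, fun h x => ?_⟩
  · simpa using h (g x)
  · simpa using h (g⁻¹ x)

/-- If `σ j = y ≠ j`, then `(y j) σ` fixes `j`: the point `j` is split off its cycle. -/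
lemma colU_swap (n : ℕ) {m : ℕ} (σ : Perm (Fin m)) (y j : Fin m) (hyj : y ≠ j) (h : σ j = y) :
    colU n (swap y j * σ) = n * colU n σ := by
  have hfix : (swap y j * σ) j = j := by simp [h]
  rw [colU, card_recolor n (fun x => x = j) _ y j hyj rfl]
  · congr 1
    refine Nat.card_congr (Equiv.subtypeEquivRight fun f => ?_)
    have hs : f y = f j → ∀ x, f (swap y j x) = f x := by
      intro hf x
      rcases eq_or_ne x y with rfl | h1
      · simp [hf]
      rcases eq_or_ne x j with rfl | h2
      · simp [hf]
      rw [swap_apply_of_ne_of_ne h1 h2]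
    constructor
    · rintro ⟨h1, h2⟩ x
      rw [← hs h2, ← Perm.mul_apply, h1]
    · intro h1
      have h2 : f y = f j := by rw [← h, h1]
      exact ⟨fun x => by rw [Perm.mul_apply, hs h2, h1], h2⟩
  · intro f g hf hg _ x
    rcases eq_or_ne x j with rfl | hx
    · rw [hfix]
    · rw [hg x hx, hg _ (fun h' => hx ((swap y j * σ).injective (h'.trans hfix.symm))), hf]
  · rintro f _ x rfl; rfl

/-! ### Perfect matchings as fixed-point-free involutions -/

/-- The involution exchanging `2r` and `2r + 1`, encoding the standard perfect matching. -/
def m0 (k : ℕ) : Perm (Fin (2 * k)) :=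
  Function.Involutive.toPerm
    (fun x => if h : (x : ℕ) % 2 = 0 then ⟨x + 1, by omega⟩ else ⟨x - 1, by omega⟩) (by
      intro x
      have := x.2
      ext
      grind)

variable {k : ℕ}

lemma m0_val (x : Fin (2 * k)) :
    (m0 k x : ℕ) = if (x : ℕ) % 2 = 0 then (x : ℕ) + 1 else (x : ℕ) - 1 := by
  change Fin.val (dite _ _ _) = _
  split_ifs <;> rfl

lemma m0_m0 (x : Fin (2 * k)) : m0 k (m0 k x) = x := by
  ext; rw [m0_val, m0_val]; grind

lemma m0_ne (x : Fin (2 * k)) : m0 k x ≠ x := by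
  intro h
  have := congrArg Fin.val h
  rw [m0_val] at this
  grind

lemma m0_lo (r : Fin k) : m0 k (lo r) = hi r := by
  ext; rw [m0_val]; simp [lo, hi]

lemma m0_hi (r : Fin k) : m0 k (hi r) = lo r := by
  rw [← m0_lo, m0_m0]

lemma lo_or_hi (x : Fin (2 * k)) : ∃ r : Fin k, x = lo r ∨ x = hi r := by
  refine ⟨⟨x / 2, by omega⟩, ?_⟩
  simp only [lo, hi, Fin.ext_iff]
  omega

/-- `H_k` is the centralizer of the standard matching involution. -/
lemma isHyper_iff (ζ : Perm (Fin (2 * k))) : IsHyper ζ ↔ ∀ x, ζ (m0 k x) = m0 k (ζ x) := by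
  constructor
  · intro h
    have key : ∀ i : Fin k, ζ (hi i) = m0 k (ζ (lo i)) := by
      intro i
      obtain ⟨j, hj⟩ := h i
      have hne : ζ (lo i) ≠ ζ (hi i) := fun h' => by
        have := ζ.injective h'
        rw [← m0_lo] at this
        exact m0_ne _ this.symm
      have h1 : ζ (lo i) ∈ ({lo j, hi j} : Finset (Fin (2 * k))) := by rw [← hj]; simp
      have h2 : ζ (hi i) ∈ ({lo j, hi j} : Finset (Fin (2 * k))) := by rw [← hj]; simp
      simp only [Finset.mem_insert, Finset.mem_singleton] at h1 h2
      rcases h1 with h1 | h1 <;> rcases h2 with h2 | h2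
      · exact absurd (h1.trans h2.symm) hne
      · rw [h1, h2, m0_lo]
      · rw [h1, h2, m0_hi]
      · exact absurd (h1.trans h2.symm) hne
    intro x
    obtain ⟨r, rfl | rfl⟩ := lo_or_hi x
    · rw [m0_lo, key]
    · rw [m0_hi, key, m0_m0]
  · intro h i
    obtain ⟨j, hj⟩ := lo_or_hi (ζ (lo i))
    refine ⟨j, ?_⟩
    rw [← m0_lo i, h]
    rcases hj with hj | hj
    · rw [hj, m0_lo]
    · rw [hj, m0_hi, Finset.pair_comm]

/-- `H_k` as a subgroup of `S_{2k}`. -/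
def Hyp (k : ℕ) : Subgroup (Perm (Fin (2 * k))) := Subgroup.centralizer {m0 k}

lemma mem_Hyp {ζ : Perm (Fin (2 * k))} : ζ ∈ Hyp k ↔ ∀ x, ζ (m0 k x) = m0 k (ζ x) := by
  rw [Hyp, Subgroup.mem_centralizer_singleton_iff, Equiv.ext_iff]
  rfl

lemma isHyper_iff_mem (ζ : Perm (Fin (2 * k))) : IsHyper ζ ↔ ζ ∈ Hyp k := by
  rw [isHyper_iff, mem_Hyp]

/-- The involution encoding the matching `{σ(2r), σ(2r+1)}`. -/
def mu (σ : Perm (Fin (2 * k))) : Perm (Fin (2 * k)) := σ * m0 k * σ⁻¹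

lemma mu_apply (σ : Perm (Fin (2 * k))) (x) : mu σ x = σ (m0 k (σ⁻¹ x)) := rfl

lemma mu_mu (σ : Perm (Fin (2 * k))) (x) : mu σ (mu σ x) = x := by
  simp [mu_apply, m0_m0]

lemma mu_ne (σ : Perm (Fin (2 * k))) (x) : mu σ x ≠ x := by
  intro h
  apply m0_ne (σ⁻¹ x)
  apply σ.injective
  rw [← mu_apply, h]; simp

lemma mu_mul (s σ : Perm (Fin (2 * k))) (x) : mu (s * σ) x = s (mu σ (s⁻¹ x)) := by
  simp [mu_apply]

lemma mu_mul_right (σ : Perm (Fin (2 * k))) {ζ} (hζ : ζ ∈ Hyp k) : mu (σ * ζ) = mu σ := by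
  ext x
  rw [mu_apply, mu_apply, Perm.mul_apply, mem_Hyp.1 hζ]
  simp

lemma mu_eq_m0_iff (σ : Perm (Fin (2 * k))) : (∀ x, mu σ x = m0 k x) ↔ σ ∈ Hyp k := by
  rw [mem_Hyp]
  constructor
  · intro h x
    have := h (σ x)
    rw [← this, mu_apply]; simp
  · intro h x
    rw [mu_apply, h]; simp

/-- The number of colourings with `n` colours constant on the components of `Γ(σ)`. -/
noncomputable def colO (n : ℕ) (σ : Perm (Fin (2 * k))) : ℕ :=
  Nat.card {f : Fin (2 * k) → Fin n // (∀ x, f (m0 k x) = f x) ∧ ∀ x, f (mu σ x) = f x}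

lemma colO_eq (n : ℕ) (σ : Perm (Fin (2 * k))) : colO n σ = n ^ ccount σ := by
  classical
  have hadj : ∀ f : Fin (2 * k) → Fin n, ((∀ x, f (m0 k x) = f x) ∧ ∀ x, f (mu σ x) = f x) ↔
      ∀ a b, (Gamma σ).Adj a b → f a = f b := by
    intro f
    constructor
    · rintro ⟨h1, h2⟩ a b hab
      have hlo : ∀ r : Fin k, f (lo r) = f (hi r) := fun r => by rw [← m0_lo, h1]
      have hσ : ∀ r : Fin k, f (σ (lo r)) = f (σ (hi r)) := fun r => by
        rw [← h2 (σ (lo r)), mu_apply]; simp [m0_lo]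
      rw [Gamma, SimpleGraph.fromRel_adj] at hab
      rcases hab.2 with (⟨r, rfl, rfl⟩ | ⟨r, rfl, rfl⟩) | (⟨r, rfl, rfl⟩ | ⟨r, rfl, rfl⟩)
      exacts [hlo r, hσ r, (hlo r).symm, (hσ r).symm]
    · intro h
      have hlo : ∀ r : Fin k, f (lo r) = f (hi r) := fun r => by
        refine h _ _ ((SimpleGraph.fromRel_adj _ _ _).2 ⟨?_, Or.inl (Or.inl ⟨r, rfl, rfl⟩)⟩)
        rw [← m0_lo]; exact (m0_ne _).symm
      have hσ : ∀ r : Fin k, f (σ (lo r)) = f (σ (hi r)) := fun r => by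
        refine h _ _ ((SimpleGraph.fromRel_adj _ _ _).2 ⟨?_, Or.inl (Or.inr ⟨r, rfl, rfl⟩)⟩)
        rw [← m0_lo]; exact fun h' => (m0_ne _).symm (σ.injective h')
      constructor
      · intro x
        obtain ⟨r, rfl | rfl⟩ := lo_or_hi x
        · rw [m0_lo, hlo]
        · rw [m0_hi, hlo]
      · intro x
        rw [mu_apply]
        obtain ⟨r, hr⟩ := lo_or_hi (σ⁻¹ x)
        have hx : x = σ (σ⁻¹ x) := by simp
        rcases hr with hr | hr
        · rw [hr] at hx ⊢; rw [hx, m0_lo, hσ]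
        · rw [hr] at hx ⊢; rw [hx, m0_hi, hσ]
  have e : {f : Fin (2 * k) → Fin n // ∀ a b, (Gamma σ).Adj a b → f a = f b} ≃
      ((Gamma σ).ConnectedComponent → Fin n) :=
    { toFun := fun f => SimpleGraph.ConnectedComponent.lift f.1 (by
        intro v w p _
        induction p with
        | nil => rfl
        | cons h p ih => exact (f.2 _ _ h).trans (ih ((SimpleGraph.Walk.cons_isPath_iff _ _).1 ‹_›).1))
      invFun := fun g => ⟨fun x => g ((Gamma σ).connectedComponentMk x), fun a b h =>
        congrArg g (SimpleGraph.ConnectedComponent.connectedComponentMk_eq_of_adj h)⟩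
      left_inv := fun f => rfl
      right_inv := fun g => by
        funext c
        induction c using SimpleGraph.ConnectedComponent.ind
        rfl }
  rw [colO, Nat.card_congr (Equiv.subtypeEquivRight hadj), Nat.card_congr e, Nat.card_fun,
    Nat.card_fin, ccount]

lemma colO_mul_right (n : ℕ) (σ : Perm (Fin (2 * k))) {ζ} (hζ : ζ ∈ Hyp k) :
    colO n (σ * ζ) = colO n σ := by
  rw [colO, mu_mul_right σ hζ, colO]

lemma colO_mul_left (n : ℕ) (σ : Perm (Fin (2 * k))) {ζ} (hζ : ζ ∈ Hyp k) :
    colO n (ζ * σ) = colO n σ := by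
  have hζ' := mem_Hyp.1 (inv_mem hζ)
  rw [mem_Hyp] at hζ
  refine Nat.card_congr ((Equiv.arrowCongr ζ.symm (Equiv.refl _)).subtypeEquiv fun f => ?_)
  simp only [Equiv.arrowCongr_apply, Function.comp, Equiv.refl_apply, Equiv.symm_symm]
  refine and_congr ⟨fun h x => ?_, fun h x => ?_⟩ ⟨fun h x => ?_, fun h x => ?_⟩
  · rw [hζ, h]
  · have := h (ζ⁻¹ x); rw [hζ] at this; simpa using this
  · have := h (ζ x); rw [mu_mul] at this; simpa using this
  · have := h (ζ⁻¹ x); rw [mu_mul]; simpa using this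

/-- If the matching of `σ` pairs `q'` with `y`, where `{q, q'}` is a standard pair different from
that of `y`, then applying the transposition `(y q)` to the matching splits off `{q, q'}` as a
component of its own. -/
lemma colO_swap (n : ℕ) (σ : Perm (Fin (2 * k))) (y q : Fin (2 * k)) (hyq : y ≠ q)
    (hyq' : y ≠ m0 k q) (h : mu σ (m0 k q) = y) :
    colO n (swap y q * σ) = n * colO n σ := by
  have hq' : swap y q (m0 k q) = m0 k q := swap_apply_of_ne_of_ne hyq'.symm (m0_ne q)
  have h1 : mu (swap y q * σ) (m0 k q) = q := by
    rw [mu_mul, swap_inv, hq', h, swap_apply_left]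
  have h2 : mu (swap y q * σ) q = m0 k q := by
    have := mu_mu (swap y q * σ) (m0 k q)
    rwa [h1] at this
  have hy : mu σ y = m0 k q := by rw [← h, mu_mu]
  rw [colO, card_recolor n (fun x => x = q ∨ x = m0 k q) _ y q (by tauto) (Or.inl rfl)]
  · congr 1
    refine Nat.card_congr (Equiv.subtypeEquivRight fun f => ?_)
    have hs : f y = f q → ∀ x, f (swap y q x) = f x := by
      intro hf x
      rcases eq_or_ne x y with rfl | h1
      · simp [hf]
      rcases eq_or_ne x q with rfl | h2
      · simp [hf]
      rw [swap_apply_of_ne_of_ne h1 h2]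
    constructor
    · rintro ⟨⟨h1, h2⟩, h3⟩
      refine ⟨h1, fun x => ?_⟩
      have := h2 (swap y q x)
      rw [mu_mul, hs h3, hs h3] at this
      simpa using this
    · rintro ⟨h1, h2⟩
      have h3 : f y = f q := by rw [← h2 y, hy, h1]
      refine ⟨⟨h1, fun x => ?_⟩, h3⟩
      rw [mu_mul, hs h3, h2, swap_inv, hs h3]
  · intro f g hf hg hg'
    have inv : ∀ ν : Perm (Fin (2 * k)), (∀ x, ν (ν x) = x) → ν q = m0 k q →
        (∀ x, f (ν x) = f x) → ∀ x, g (ν x) = g x := by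
      intro ν hν hνq hf x
      have hνq' : ν (m0 k q) = q := by rw [← hνq, hν]
      by_cases hx : x = q ∨ x = m0 k q
      · rcases hx with rfl | rfl
        · rw [hνq]; exact hg' _ (Or.inr rfl)
        · rw [hνq']; exact (hg' _ (Or.inr rfl)).symm
      · have hx' : ¬ (ν x = q ∨ ν x = m0 k q) := by
          rintro (h' | h')
          · apply hx; right; rw [← hν x, h', hνq]
          · apply hx; left; rw [← hν x, h', hνq']
        rw [hg _ hx, hg _ hx', hf]
    exact ⟨inv _ m0_m0 rfl hf.1, inv _ (mu_mu _) h2 hf.2⟩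
  · rintro f hf x (rfl | rfl)
    · rfl
    · exact hf.1 _

/-! ### Jucys–Murphy operators -/

section JucysMurphy

variable {m : ℕ}

/-- The Jucys–Murphy element `∑_{a < b} (a b)`, acting on functions on `S_m` by left
convolution. -/
noncomputable def jmF (b : Fin m) : Module.End ℂ (Perm (Fin m) → ℂ) :=
  ∑ a ∈ Finset.Iio b, LinearMap.funLeft ℂ ℂ (swap a b * ·)

lemma jmF_apply (b : Fin m) (f : Perm (Fin m) → ℂ) (σ) :
    jmF b f σ = ∑ a ∈ Finset.Iio b, f (swap a b * σ) := by
  simp [jmF, LinearMap.sum_apply, Finset.sum_apply]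

lemma jmF_commute_of_lt {i j : Fin m} (hij : i < j) : Commute (jmF i) (jmF j) := by
  refine LinearMap.ext fun f => funext fun σ => ?_
  simp only [Module.End.mul_apply, jmF_apply]
  conv_rhs => rw [Finset.sum_comm]
  refine Finset.sum_congr rfl fun a ha => ?_
  have ha := Finset.mem_Iio.1 ha
  -- The transposition `(a i)` permutes the points below `j` and fixes `j`.
  refine Finset.sum_equiv (swap a i) (fun b => ?_) (fun b _ => ?_)
  · simp only [Finset.mem_Iio]
    rcases eq_or_ne b a with rfl | h1
    · simp [hij, ha.trans hij]
    rcases eq_or_ne b i with rfl | h2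
    · simp [hij, ha.trans hij]
    rw [swap_apply_of_ne_of_ne h1 h2]
  · have hj : swap a i j = j := swap_apply_of_ne_of_ne (ha.trans hij).ne' hij.ne'
    have := Equiv.swap_apply_apply (swap a i) b j
    rw [hj] at this
    rw [this]
    congr 1
    simp [mul_assoc]

/-- `jmF` indexed by natural numbers, with value `0` outside the range. -/
noncomputable def jm (m j : ℕ) : Module.End ℂ (Perm (Fin m) → ℂ) :=
  if h : j < m then jmF ⟨j, h⟩ else 0

lemma jm_commute (i j : ℕ) : Commute (jm m i) (jm m j) := by
  unfold jm
  split_ifs with hi hj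
  · rcases lt_trichotomy i j with h | rfl | h
    · exact jmF_commute_of_lt h
    · exact Commute.refl _
    · exact (jmF_commute_of_lt (i := ⟨j, hj⟩) (j := ⟨i, hi⟩) h).symm
  all_goals simp

/-- The operator `z + J_j`. -/
noncomputable def zj (m : ℕ) (z : ℂ) (j : ℕ) : Module.End ℂ (Perm (Fin m) → ℂ) :=
  z • 1 + jm m j

lemma zj_commute (z w : ℂ) (i j : ℕ) : Commute (zj m z i) (zj m w j) := by
  unfold zj
  refine Commute.add_left ?_ (Commute.add_right ?_ (jm_commute i j))
  · exact (Commute.one_left _).smul_left z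
  · exact (Commute.one_right _).smul_right w

/-- The ordered product `g (j - 1) * ⋯ * g 0`. -/
def dprod {R : Type*} [Monoid R] (g : ℕ → R) : ℕ → R
  | 0 => 1
  | j + 1 => g j * dprod g j

lemma commute_dprod {R : Type*} [Monoid R] (x : R) (g : ℕ → R) (j : ℕ)
    (h : ∀ i, Commute x (g i)) : Commute x (dprod g j) := by
  induction j with
  | zero => exact Commute.one_right _
  | succ j ih => exact (h j).mul_right ih

lemma conv_jm (j : ℕ) (f g : Perm (Fin m) → ℂ) : conv (jm m j f) g = jm m j (conv f g) := by
  unfold jm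
  split_ifs with h
  · funext σ
    simp only [jmF_apply, conv, Finset.sum_mul]
    rw [Finset.sum_comm]
    refine Finset.sum_congr rfl fun a _ => ?_
    refine Fintype.sum_equiv (Equiv.mulLeft (swap a ⟨j, h⟩)) _ _ fun τ => ?_
    simp only [Equiv.coe_mulLeft]
    congr 2
    group
  · funext σ; simp [conv]

lemma conv_smul_left (c : ℂ) (f g : Perm (Fin m) → ℂ) : conv (c • f) g = c • conv f g := by
  funext σ; simp [conv, Finset.mul_sum, mul_assoc]

lemma conv_smul_right (c : ℂ) (f g : Perm (Fin m) → ℂ) : conv f (c • g) = c • conv f g := by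
  funext σ; simp only [conv, Finset.mul_sum, Pi.smul_apply, smul_eq_mul]
  exact Finset.sum_congr rfl fun _ _ => by ring

lemma conv_add_left (f f' g : Perm (Fin m) → ℂ) : conv (f + f') g = conv f g + conv f' g := by
  funext σ; simp [conv, Finset.sum_add_distrib, add_mul]

lemma conv_zj (z : ℂ) (j : ℕ) (f g : Perm (Fin m) → ℂ) :
    conv (zj m z j f) g = zj m z j (conv f g) := by
  simp only [zj, LinearMap.add_apply, LinearMap.smul_apply, Module.End.one_apply, conv_add_left,
    conv_jm, conv_smul_left]

lemma conv_dprod (g : ℕ → Module.End ℂ (Perm (Fin m) → ℂ))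
    (hg : ∀ j f f', conv (g j f) f' = g j (conv f f')) (j : ℕ) (f f' : Perm (Fin m) → ℂ) :
    conv (dprod g j f) f' = dprod g j (conv f f') := by
  induction j with
  | zero => rfl
  | succ j ih => simp only [dprod, Module.End.mul_apply, hg, ih]

lemma conv_assoc (f g h : Perm (Fin m) → ℂ) : conv (conv f g) h = conv f (conv g h) := by
  funext σ
  simp only [conv, Finset.sum_mul, Finset.mul_sum]
  rw [Finset.sum_comm]
  refine Finset.sum_congr rfl fun ρ _ => ?_
  refine Fintype.sum_equiv (Equiv.mulLeft ρ⁻¹) _ _ fun τ => ?_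
  simp [mul_assoc]

lemma deltaId_conv (f : Perm (Fin m) → ℂ) : conv deltaId f = f := by
  funext σ; simp [conv, deltaId]

lemma conv_deltaId (f : Perm (Fin m) → ℂ) : conv f deltaId = f := by
  funext σ
  rw [conv, Finset.sum_eq_single σ]
  · simp [deltaId]
  · intro τ _ hτ
    rw [deltaId, if_neg, mul_zero]
    intro h
    exact hτ (inv_mul_eq_one.1 h)
  · simp

/-! ### Product formula for `T^U` -/

open scoped Classical in
/-- `T^U` restricted to the permutations fixing every point `≥ j`. -/
noncomputable def Ufun (n j : ℕ) (σ : Perm (Fin m)) : ℂ :=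
  if ∀ x : Fin m, j ≤ (x : ℕ) → σ x = x then (colU n σ : ℂ) else 0

lemma zj_Ufun (n j : ℕ) (hj : j < m) :
    zj m n j (Ufun n j) = (n : ℂ) • Ufun (m := m) n (j + 1) := by
  classical
  funext σ
  have hJ : zj m n j (Ufun n j) σ =
      n * Ufun n j σ + ∑ a ∈ Finset.Iio (⟨j, hj⟩ : Fin m), Ufun n j (swap a ⟨j, hj⟩ * σ) := by
    simp [zj, jm, hj, jmF_apply]
  rw [hJ]
  simp only [Pi.smul_apply, smul_eq_mul]
  set q : Fin m := ⟨j, hj⟩ with hq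
  have hqv : (q : ℕ) = j := rfl
  have hge : ∀ x : Fin m, j ≤ (x : ℕ) ↔ x = q ∨ j + 1 ≤ (x : ℕ) := fun x => by
    rw [Fin.ext_iff]; omega
  have hsw : ∀ a < q, ∀ x : Fin m, j + 1 ≤ (x : ℕ) → swap a q x = x := fun a ha x hx => by
    apply swap_apply_of_ne_of_ne
    · rintro rfl; rw [Fin.lt_def] at ha; omega
    · rintro rfl; omega
  by_cases hC : ∀ x : Fin m, j + 1 ≤ (x : ℕ) → σ x = x
  · have hle : σ q ≤ q := by
      by_contra hlt
      rw [not_le, Fin.lt_def] at hlt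
      have := σ.injective (hC (σ q) (by omega))
      rw [this] at hlt
      omega
    have hUS : Ufun n (j + 1) σ = (colU n σ : ℂ) := if_pos hC
    have hU : ∀ a < q, Ufun n j (swap a q * σ) = if a = σ q then (n : ℂ) * colU n σ else 0 := by
      intro a ha
      split_ifs with h
      · have hcond : ∀ x : Fin m, j ≤ (x : ℕ) → (swap a q * σ) x = x := by
          intro x hx
          rcases (hge x).1 hx with rfl | hx
          · simp [h]
          · rw [Perm.mul_apply, hC x hx, hsw a ha x hx]
        rw [Ufun, if_pos hcond, colU_swap n σ a q ha.ne h.symm]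
        push_cast; rfl
      · rw [Ufun, if_neg]
        intro hcond
        have := hcond q le_rfl
        rw [Perm.mul_apply, swap_apply_eq_iff, swap_apply_right] at this
        exact h this.symm
    rw [Finset.sum_congr rfl fun a ha => hU a (Finset.mem_Iio.1 ha), Finset.sum_ite_eq', hUS]
    rcases hle.lt_or_eq with hlt | heq
    · have : Ufun n j σ = 0 := if_neg fun h => hlt.ne (h q le_rfl)
      rw [if_pos (Finset.mem_Iio.2 hlt), this]; ring
    · have : Ufun n j σ = (colU n σ : ℂ) := by
        refine if_pos fun x hx => ?_
        rcases (hge x).1 hx with rfl | hx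
        exacts [heq, hC x hx]
      rw [if_neg (by simp [heq]), this, add_zero]
  · have h1 : Ufun n (j + 1) σ = 0 := if_neg hC
    have h2 : Ufun n j σ = 0 := if_neg fun h => hC fun x hx => h x (by omega)
    rw [h1, h2, Finset.sum_eq_zero]
    · simp
    · intro a ha
      refine if_neg fun h => hC fun x hx => ?_
      have := h x (by omega)
      rwa [Perm.mul_apply, swap_apply_eq_iff, hsw a (Finset.mem_Iio.1 ha) x hx] at this

lemma dprod_deltaId (n : ℕ) (hn : n ≠ 0) :
    dprod (zj m n) m deltaId = fun σ : Perm (Fin m) => (n : ℂ) ^ cyc σ := by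
  have hn' : (n : ℂ) ≠ 0 := by exact_mod_cast hn
  have h0 : Ufun (m := m) n 0 = (n : ℂ) ^ m • deltaId := by
    funext σ
    by_cases h : σ = 1
    · subst h
      have : colU n (1 : Perm (Fin m)) = n ^ m := by rw [colU_eq]; simp [cyc]
      simp [Ufun, deltaId, this]
    · have h' : ¬ ∀ x : Fin m, 0 ≤ (x : ℕ) → σ x = x := fun h' =>
        h (Equiv.ext fun x => h' x (Nat.zero_le _))
      rw [Ufun, if_neg h']; simp [deltaId, h]
  have h1 : ∀ j ≤ m, dprod (zj m n) j (Ufun n 0) = (n : ℂ) ^ j • Ufun (m := m) n j := by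
    intro j
    induction j with
    | zero => simp [dprod]
    | succ j ih =>
      intro hj
      rw [dprod, Module.End.mul_apply, ih (by omega), map_smul, zj_Ufun n j (by omega), smul_smul,
        pow_succ]
  have h2 := h1 m le_rfl
  rw [h0, map_smul] at h2
  have h3 := smul_right_injective _ (pow_ne_zero m hn') h2
  rw [h3]
  funext σ
  rw [Ufun, if_pos (fun x hx => absurd x.2 (by omega)), colU_eq]
  push_cast; rfl

end JucysMurphy

/-! ### Product formula for `T^O` -/

lemma colO_of_mem (n : ℕ) {σ : Perm (Fin (2 * k))} (hσ : σ ∈ Hyp k) : colO n σ = n ^ k := by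
  have hmu := (mu_eq_m0_iff σ).2 hσ
  let e : {f : Fin (2 * k) → Fin n // (∀ x, f (m0 k x) = f x) ∧ ∀ x, f (mu σ x) = f x} ≃
      (Fin k → Fin n) :=
    { toFun := fun f r => f.1 (lo r)
      invFun := fun g => ⟨fun x => g ⟨x / 2, by omega⟩, by
        have h : ∀ x : Fin (2 * k), g ⟨m0 k x / 2, by omega⟩ = g ⟨x / 2, by omega⟩ := by
          intro x
          congr 2
          rw [m0_val]
          split_ifs <;> omega
        exact ⟨h, fun x => by simpa only [hmu] using h x⟩⟩
      left_inv := by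
        rintro ⟨f, hf, -⟩
        ext x
        obtain ⟨r, rfl | rfl⟩ := lo_or_hi x
        · simp [lo]
        · have : (⟨(hi r : ℕ) / 2, by omega⟩ : Fin k) = r := by ext; simp [hi]; omega
          simp only [this]
          rw [← m0_lo, hf]
      right_inv := by
        intro g
        funext r
        simp [lo] }
  rw [colO, Nat.card_congr e, Nat.card_fun, Nat.card_fin, Nat.card_fin]

open scoped Classical in
/-- `T^O` restricted to the permutations whose matching contains every standard pair
`{2i, 2i+1}` with `i ≥ j`. -/
noncomputable def Vfun (n j : ℕ) (σ : Perm (Fin (2 * k))) : ℂ :=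
  if ∀ x : Fin (2 * k), 2 * j ≤ (x : ℕ) → mu σ x = m0 k x then (colO n σ : ℂ) else 0

lemma zj_Vfun (n j : ℕ) (hj : j < k) :
    zj (2 * k) n (2 * j) (Vfun n j) = (n : ℂ) • Vfun (k := k) n (j + 1) := by
  classical
  funext σ
  have hj' : 2 * j < 2 * k := by omega
  have hJ : zj (2 * k) n (2 * j) (Vfun n j) σ = n * Vfun n j σ +
      ∑ a ∈ Finset.Iio (⟨2 * j, hj'⟩ : Fin (2 * k)), Vfun n j (swap a ⟨2 * j, hj'⟩ * σ) := by
    simp only [zj, jm, hj', dite_true, LinearMap.add_apply, LinearMap.smul_apply,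
      Module.End.one_apply, Pi.add_apply, Pi.smul_apply, smul_eq_mul, jmF_apply]
  rw [hJ]
  simp only [Pi.smul_apply, smul_eq_mul]
  set q : Fin (2 * k) := ⟨2 * j, hj'⟩ with hq
  have hqv : (q : ℕ) = 2 * j := rfl
  have hpv : (m0 k q : ℕ) = 2 * j + 1 := by rw [m0_val]; simp [hqv]
  have hge : ∀ x : Fin (2 * k), 2 * j ≤ (x : ℕ) ↔ (x = q ∨ x = m0 k q) ∨ 2 * (j + 1) ≤ (x : ℕ) :=
    fun x => by rw [Fin.ext_iff, Fin.ext_iff]; omega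
  have hm0 : ∀ x : Fin (2 * k), 2 * (j + 1) ≤ (x : ℕ) → 2 * (j + 1) ≤ (m0 k x : ℕ) := by
    intro x hx; rw [m0_val]; split_ifs <;> omega
  have hsw : ∀ a < q, ∀ x : Fin (2 * k), 2 * j + 1 ≤ (x : ℕ) → swap a q x = x :=
    fun a ha x hx => by
      apply swap_apply_of_ne_of_ne
      · rintro rfl; rw [Fin.lt_def] at ha; omega
      · rintro rfl; omega
  -- A matching with the edge `{q, m0 q}` and the later standard pairs satisfies the condition.
  have hcrit : ∀ τ : Perm (Fin (2 * k)), mu τ (m0 k q) = q →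
      (∀ x : Fin (2 * k), 2 * (j + 1) ≤ (x : ℕ) → mu τ x = m0 k x) →
      ∀ x : Fin (2 * k), 2 * j ≤ (x : ℕ) → mu τ x = m0 k x := by
    intro τ h1 h2 x hx
    rcases (hge x).1 hx with (rfl | rfl) | hx
    · have := mu_mu τ (m0 k q); rwa [h1] at this
    · rw [h1, m0_m0]
    · exact h2 x hx
  by_cases hC : ∀ x : Fin (2 * k), 2 * (j + 1) ≤ (x : ℕ) → mu σ x = m0 k x
  · set y := mu σ (m0 k q) with hy
    have hle : y ≤ q := by
      by_contra hlt
      rw [not_le, Fin.lt_def] at hlt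
      have hyne : (y : ℕ) ≠ 2 * j + 1 := fun h => mu_ne σ (m0 k q) (Fin.ext (h.trans hpv.symm))
      have h1 : 2 * (j + 1) ≤ (y : ℕ) := by omega
      have h2 := hC y h1
      rw [hy, mu_mu, ← hy] at h2
      have := hm0 y h1
      rw [← h2] at this
      omega
    have hVS : Vfun n (j + 1) σ = (colO n σ : ℂ) := if_pos hC
    have hV : ∀ a < q, Vfun n j (swap a q * σ) = if a = y then (n : ℂ) * colO n σ else 0 := by
      intro a ha
      have hsp : swap a q (m0 k q) = m0 k q := hsw a ha _ (by omega)
      split_ifs with h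
      · have hcond := hcrit (swap a q * σ)
          (by rw [mu_mul, swap_inv, hsp, ← hy, h, swap_apply_left])
          (fun x hx => by
            rw [mu_mul, swap_inv, hsw a ha x (by omega), hC x hx,
              hsw a ha _ (by have := hm0 x hx; omega)])
        have hne : a ≠ m0 k q := fun h' => by
          rw [Fin.lt_def] at ha
          rw [h'] at ha
          omega
        rw [Vfun, if_pos hcond, colO_swap n σ a q ha.ne hne (by rw [← hy, h])]
        push_cast; rfl
      · rw [Vfun, if_neg]
        intro hcond
        have := hcond (m0 k q) (by omega)
        rw [mu_mul, swap_inv, hsp, ← hy, m0_m0, swap_apply_eq_iff, swap_apply_right] at this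
        exact h this.symm
    rw [Finset.sum_congr rfl fun a ha => hV a (Finset.mem_Iio.1 ha), Finset.sum_ite_eq', hVS]
    rcases hle.lt_or_eq with hlt | heq
    · have : Vfun n j σ = 0 := if_neg fun h => by
        have := h (m0 k q) (by omega)
        rw [m0_m0, ← hy] at this
        exact hlt.ne this
      rw [if_pos (Finset.mem_Iio.2 hlt), this]; ring
    · have : Vfun n j σ = (colO n σ : ℂ) := if_pos (hcrit σ heq hC)
      rw [if_neg (by simp [heq]), this, add_zero]
  · have h1 : Vfun n (j + 1) σ = 0 := if_neg hC
    have h2 : Vfun n j σ = 0 := if_neg fun h => hC fun x hx => h x (by omega)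
    rw [h1, h2, Finset.sum_eq_zero]
    · simp
    · intro a ha
      have ha := Finset.mem_Iio.1 ha
      refine if_neg fun h => hC fun x hx => ?_
      have := h x (by omega)
      rwa [mu_mul, swap_inv, hsw a ha x (by omega), swap_apply_eq_iff,
        hsw a ha _ (by have := hm0 x hx; omega)] at this

/-- The orthogonal Gram function `T^O(·; n)`. -/
noncomputable def TO (k n : ℕ) : Perm (Fin (2 * k)) → ℂ := fun σ => (n : ℂ) ^ ccount σ

lemma TO_eq_colO (n : ℕ) (σ : Perm (Fin (2 * k))) : TO k n σ = colO n σ := by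
  rw [TO, colO_eq]; push_cast; rfl

lemma dprod_oneH (n : ℕ) (hn : n ≠ 0) :
    dprod (fun j => zj (2 * k) n (2 * j)) k oneH = TO k n := by
  have hn' : (n : ℂ) ≠ 0 := by exact_mod_cast hn
  have h0 : Vfun (k := k) n 0 = (n : ℂ) ^ k • oneH := by
    funext σ
    have hiff : (∀ x : Fin (2 * k), 2 * 0 ≤ (x : ℕ) → mu σ x = m0 k x) ↔ σ ∈ Hyp k := by
      rw [← mu_eq_m0_iff]; simp
    rw [Vfun, Pi.smul_apply, oneH, isHyper_iff_mem]
    by_cases h : σ ∈ Hyp k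
    · rw [if_pos (hiff.2 h), if_pos h, colO_of_mem n h]; simp
    · rw [if_neg (fun h' => h (hiff.1 h')), if_neg h]; simp
  have h1 : ∀ j ≤ k, dprod (fun j => zj (2 * k) n (2 * j)) j (Vfun n 0) =
      (n : ℂ) ^ j • Vfun (k := k) n j := by
    intro j
    induction j with
    | zero => simp [dprod]
    | succ j ih =>
      intro hj
      rw [dprod, Module.End.mul_apply, ih (by omega), map_smul, zj_Vfun n j (by omega), smul_smul,
        pow_succ]
  have h2 := h1 k le_rfl
  rw [h0, map_smul] at h2
  have h3 := smul_right_injective _ (pow_ne_zero k hn') h2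
  rw [h3]
  funext σ
  rw [Vfun, if_pos (fun x hx => absurd x.2 (by omega)), TO_eq_colO]

/-! ### Relating the even and odd factors on the indicator of `H_k` -/

lemma oneH_apply_congr {σ τ : Perm (Fin (2 * k))} (h : σ ∈ Hyp k ↔ τ ∈ Hyp k) :
    (oneH σ : ℂ) = oneH τ := by
  rw [oneH, oneH, isHyper_iff_mem, isHyper_iff_mem]
  by_cases hτ : τ ∈ Hyp k
  · rw [if_pos (h.2 hτ), if_pos hτ]
  · rw [if_neg (fun h' => hτ (h.1 h')), if_neg hτ]

/-- For two different standard pairs `{x, x'}` and `{y, y'}`, the transpositions `(x y)` and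
`(x' y')` act in the same way on `H_k`, since their product lies in `H_k`. -/
lemma swap_mul_swap_mem {x y : Fin (2 * k)} (hxy : x ≠ y) (hxy' : x ≠ m0 k y) :
    swap (m0 k x) (m0 k y) * swap x y ∈ Hyp k := by
  have h1 : m0 k x ≠ y := fun h => hxy' (by rw [← h, m0_m0])
  have h2 : m0 k x ≠ m0 k y := fun h => hxy ((m0 k).injective h)
  have hx := m0_ne x
  have hy := m0_ne y
  rw [mem_Hyp]
  intro z
  simp only [Perm.mul_apply]
  by_cases z1 : z = x
  · subst z1
    rw [swap_apply_of_ne_of_ne hx h1, swap_apply_left, swap_apply_left,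
      swap_apply_of_ne_of_ne h1.symm hy.symm]
  by_cases z2 : z = y
  · subst z2
    rw [swap_apply_of_ne_of_ne hxy'.symm hy, swap_apply_right, swap_apply_right,
      swap_apply_of_ne_of_ne hx.symm hxy']
  by_cases z3 : z = m0 k x
  · subst z3
    rw [m0_m0, swap_apply_left, swap_apply_of_ne_of_ne h1.symm hy.symm,
      swap_apply_of_ne_of_ne hx h1, swap_apply_left, m0_m0]
  by_cases z4 : z = m0 k y
  · subst z4
    rw [m0_m0, swap_apply_right, swap_apply_of_ne_of_ne hx.symm hxy',
      swap_apply_of_ne_of_ne hxy'.symm hy, swap_apply_right, m0_m0]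
  have z5 : m0 k z ≠ x := fun h => z3 (by rw [← h, m0_m0])
  have z6 : m0 k z ≠ y := fun h => z4 (by rw [← h, m0_m0])
  have z7 : m0 k z ≠ m0 k x := fun h => z1 ((m0 k).injective h)
  have z8 : m0 k z ≠ m0 k y := fun h => z2 ((m0 k).injective h)
  rw [swap_apply_of_ne_of_ne z5 z6, swap_apply_of_ne_of_ne z7 z8, swap_apply_of_ne_of_ne z1 z2,
    swap_apply_of_ne_of_ne z3 z4]

lemma swap_m0_mem (x : Fin (2 * k)) : swap x (m0 k x) ∈ Hyp k := by
  rw [mem_Hyp]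
  intro z
  by_cases z1 : z = x
  · subst z1; simp [m0_m0]
  by_cases z2 : z = m0 k x
  · subst z2; simp [m0_m0]
  have z3 : m0 k z ≠ x := fun h => z2 (by rw [← h, m0_m0])
  have z4 : m0 k z ≠ m0 k x := fun h => z1 ((m0 k).injective h)
  rw [swap_apply_of_ne_of_ne z3 z4, swap_apply_of_ne_of_ne z1 z2]

lemma jm_odd_oneH (j : ℕ) (hj : j < k) :
    jm (2 * k) (2 * j + 1) oneH = jm (2 * k) (2 * j) oneH + oneH := by
  have hq : 2 * j < 2 * k := by omega
  have hp : 2 * j + 1 < 2 * k := by omega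
  funext σ
  simp only [jm, hq, hp, dite_true, jmF_apply, Pi.add_apply]
  set q : Fin (2 * k) := ⟨2 * j, hq⟩
  set p : Fin (2 * k) := ⟨2 * j + 1, hp⟩
  have hqp : m0 k q = p := by ext; rw [m0_val]; simp [q, p]
  have hpq : m0 k p = q := by rw [← hqp, m0_m0]
  have hI : Finset.Iio p = insert q (Finset.Iio q) := by
    ext x
    simp only [Finset.mem_Iio, Finset.mem_insert, Fin.lt_def, Fin.ext_iff, p, q]
    omega
  rw [hI, Finset.sum_insert (by simp), add_comm]
  congr 1
  · refine Finset.sum_equiv (m0 k) (fun a => ?_) (fun a ha => ?_)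
    · simp only [Finset.mem_Iio, Fin.lt_def, q]
      rw [m0_val]; split_ifs <;> omega
    · have ha := Finset.mem_Iio.1 ha
      have h1 : a ≠ p := fun h => by rw [h, Fin.lt_def] at ha; simp [p, q] at ha
      have hm := swap_mul_swap_mem h1 (by rw [hpq]; exact ha.ne)
      rw [hpq] at hm
      refine oneH_apply_congr ?_
      rw [← (Hyp k).mul_mem_cancel_left hm, mul_assoc, ← mul_assoc (swap a p), Equiv.swap_mul_self,
        one_mul]
  · refine oneH_apply_congr ?_
    rw [← hqp]
    exact (Hyp k).mul_mem_cancel_left (swap_m0_mem q)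

/-- `∏_{j < 2k} (z + J_j) · 1_H = ∏_{j < k} (z + J_{2j}) (z + 1 + J_{2j}) · 1_H`. -/
lemma dprod_all_oneH (z : ℂ) :
    dprod (zj (2 * k) z) (2 * k) oneH = dprod (fun j => zj (2 * k) z (2 * j)) k
      (dprod (fun j => zj (2 * k) (z + 1) (2 * j)) k oneH) := by
  suffices h : ∀ j ≤ k, dprod (zj (2 * k) z) (2 * j) oneH =
      dprod (fun j => zj (2 * k) z (2 * j)) j
        (dprod (fun j => zj (2 * k) (z + 1) (2 * j)) j oneH) from h k le_rfl
  intro j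
  induction j with
  | zero => intro; rfl
  | succ j ih =>
    intro hj
    have hodd : zj (2 * k) z (2 * j + 1) oneH = zj (2 * k) (z + 1) (2 * j) oneH := by
      simp only [zj, LinearMap.add_apply, LinearMap.smul_apply, Module.End.one_apply,
        jm_odd_oneH j hj]
      module
    have c1 : Commute (zj (2 * k) z (2 * j + 1)) (dprod (zj (2 * k) z) (2 * j)) :=
      commute_dprod _ _ _ fun i => zj_commute _ _ _ _
    have c2 : Commute (zj (2 * k) (z + 1) (2 * j)) (dprod (zj (2 * k) z) (2 * j)) :=
      commute_dprod _ _ _ fun i => zj_commute _ _ _ _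
    have c3 : Commute (zj (2 * k) (z + 1) (2 * j)) (dprod (fun j => zj (2 * k) z (2 * j)) j) :=
      commute_dprod _ _ _ fun i => zj_commute _ _ _ _
    have c4 : Commute (zj (2 * k) z (2 * j + 1)) (zj (2 * k) z (2 * j)) := zj_commute _ _ _ _
    change (zj (2 * k) z (2 * j + 1) * (zj (2 * k) z (2 * j) * dprod (zj (2 * k) z) (2 * j)))
      oneH = (zj (2 * k) z (2 * j) * dprod (fun j => zj (2 * k) z (2 * j)) j)
        ((zj (2 * k) (z + 1) (2 * j) * dprod (fun j => zj (2 * k) (z + 1) (2 * j)) j) oneH)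
    rw [← mul_assoc, c4.eq, mul_assoc, c1.eq]
    simp only [Module.End.mul_apply]
    rw [hodd, ← Module.End.mul_apply (dprod _ _), ← c2.eq, Module.End.mul_apply, ih (by omega),
      ← Module.End.mul_apply (zj (2 * k) (z + 1) (2 * j)), c3.eq, Module.End.mul_apply]

/-! ### Convolution with the indicator of `H_k` -/

lemma oneH_conv (f : Perm (Fin (2 * k)) → ℂ) (hf : ∀ σ, ∀ ζ ∈ Hyp k, f (ζ * σ) = f σ) :
    conv oneH f = (Nat.card (Hyp k) : ℂ) • f := by
  classical
  funext σ
  have : ∀ τ, oneH τ * f (τ⁻¹ * σ) = if τ ∈ Hyp k then f σ else 0 := by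
    intro τ
    rw [oneH, isHyper_iff_mem]
    split_ifs with h
    · rw [hf _ _ (inv_mem h), one_mul]
    · rw [zero_mul]
  simp only [conv, this, Pi.smul_apply, smul_eq_mul]
  rw [← Finset.sum_filter, Finset.sum_const, nsmul_eq_mul, Nat.card_eq_fintype_card,
    ← Fintype.card_subtype]

lemma conv_oneH (f : Perm (Fin (2 * k)) → ℂ) (hf : ∀ σ, ∀ ζ ∈ Hyp k, f (σ * ζ) = f σ) :
    conv f oneH = (Nat.card (Hyp k) : ℂ) • f := by
  classical
  funext σ
  rw [conv, ← Equiv.sum_comp (Equiv.mulLeft σ)]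
  have : ∀ τ, f (σ * τ) * oneH ((σ * τ)⁻¹ * σ) = if τ ∈ Hyp k then f σ else 0 := by
    intro τ
    have e : (σ * τ)⁻¹ * σ = τ⁻¹ := by group
    rw [e, oneH, isHyper_iff_mem, inv_mem_iff]
    split_ifs with h
    · rw [hf _ _ h, mul_one]
    · rw [mul_zero]
  simp only [Equiv.coe_mulLeft, this, Pi.smul_apply, smul_eq_mul]
  rw [← Finset.sum_filter, Finset.sum_const, nsmul_eq_mul, Nat.card_eq_fintype_card,
    ← Fintype.card_subtype]

/-- The key identity `T^O(·; n) * T^O(·; n+1) = |H_k| · T^U(·; n) * 1_H`. -/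
lemma TO_conv_TO (n : ℕ) (hn : n ≠ 0) :
    conv (TO k n) (TO k (n + 1)) =
      (Nat.card (Hyp k) : ℂ) • conv (fun σ => (n : ℂ) ^ cyc σ) oneH := by
  have hTO : ∀ σ, ∀ ζ ∈ Hyp k, TO k (n + 1) (ζ * σ) = TO k (n + 1) σ := fun σ ζ hζ => by
    rw [TO_eq_colO, TO_eq_colO, colO_mul_left _ _ hζ]
  rw [← dprod_oneH n hn, conv_dprod _ (fun j => conv_zj _ _), oneH_conv _ hTO, map_smul,
    ← dprod_oneH (n + 1) (by omega), ← dprod_deltaId n hn, conv_dprod _ (conv_zj _),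
    deltaId_conv, dprod_all_oneH]
  push_cast
  rfl

/-! ### The coset representatives `M_{2k}` -/

lemma MProp_unique {τ ζ : Perm (Fin (2 * k))} (hτ : MProp τ) (hτζ : MProp (τ * ζ))
    (hζ : ζ ∈ Hyp k) : ζ = 1 := by
  have hlo : ∀ i : Fin k, ∃ j : Fin k, ζ (lo i) = lo j := by
    intro i
    obtain ⟨j, hj | hj⟩ := lo_or_hi (ζ (lo i))
    · exact ⟨j, hj⟩
    · have h1 := hτζ.1 i
      have h2 := hτ.1 j
      rw [Perm.mul_apply, Perm.mul_apply, ← m0_lo, mem_Hyp.1 hζ, hj, m0_hi] at h1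
      exact absurd h1 h2.asymm
  choose e he using hlo
  have hmono : StrictMono (fun i : Fin k => τ (lo i)) := fun i j h => hτ.2 i j h
  have hemono : StrictMono e := by
    intro i j h
    have := hτζ.2 i j h
    rw [Perm.mul_apply, Perm.mul_apply, he, he] at this
    exact hmono.lt_iff_lt.1 this
  have heid : ∀ i, e i = i := by
    have hbij : Function.Bijective e := hemono.injective.bijective_of_finite
    have := Subsingleton.elim (hemono.orderIsoOfSurjective e hbij.2) (OrderIso.refl _)
    intro i
    exact congrArg (fun φ : Fin k ≃o Fin k => φ i) this
  ext1 x
  obtain ⟨r, rfl | rfl⟩ := lo_or_hi x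
  · rw [he, heid]; rfl
  · rw [← m0_lo, mem_Hyp.1 hζ, he, heid]; rfl

/-- Points of `Fin (2k)` as pairs `(r, b)`, where `b` tells `2r + 1` from `2r`. -/
def ptEquiv (k : ℕ) : Fin k × Bool ≃ Fin (2 * k) where
  toFun p := if p.2 then hi p.1 else lo p.1
  invFun x := (⟨x / 2, by omega⟩, decide ((x : ℕ) % 2 = 1))
  left_inv := by
    rintro ⟨r, b⟩
    cases b <;> ext <;> simp [lo, hi] <;> omega
  right_inv := by
    intro x
    obtain ⟨r, rfl | rfl⟩ := lo_or_hi x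
    · simp [lo]
    · ext; simp [hi]; omega

lemma MProp_exists (σ : Perm (Fin (2 * k))) : ∃ ζ ∈ Hyp k, MProp (σ * ζ) := by
  classical
  -- `s r` tells whether the `r`-th pair has to be flipped, and `g r` is its smaller image.
  let s : Fin k → Bool := fun r => decide (σ (hi r) < σ (lo r))
  let g : Fin k → Fin (2 * k) := fun r => min (σ (lo r)) (σ (hi r))
  have hg : ∀ r, σ (ptEquiv k (r, s r)) = g r := by
    intro r
    by_cases h : σ (hi r) < σ (lo r)
    · simp [ptEquiv, s, g, h, h.le]
    · simp [ptEquiv, s, g, h, not_lt.1 h]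
  have hg' : ∀ r, g r < σ (ptEquiv k (r, !s r)) := by
    intro r
    have hne : σ (lo r) ≠ σ (hi r) := fun h => by
      have := σ.injective h
      rw [← m0_lo] at this
      exact m0_ne _ this.symm
    by_cases h : σ (hi r) < σ (lo r)
    · simp [ptEquiv, s, g, h]
    · simp [ptEquiv, s, g, h, lt_of_le_of_ne (not_lt.1 h) hne]
  have hginj : Function.Injective g := by
    intro a b hab
    rw [← hg, ← hg] at hab
    exact congrArg Prod.fst ((ptEquiv k).injective (σ.injective hab))
  let e := Tuple.sort g
  have hemono : StrictMono (g ∘ e) :=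
    (Tuple.monotone_sort g).strictMono_of_injective (hginj.comp e.injective)
  let flip : Fin k → Bool ≃ Bool := fun r => if s (e r) then Equiv.boolNot else Equiv.refl Bool
  let ζ : Perm (Fin (2 * k)) := (ptEquiv k).symm.trans ((Equiv.prodShear e flip).trans (ptEquiv k))
  have hζlo : ∀ r, ζ (lo r) = ptEquiv k (e r, s (e r)) := by
    intro r
    have : lo r = ptEquiv k (r, false) := by simp [ptEquiv]
    rw [this]
    cases h : s (e r) <;> simp [ζ, flip, Equiv.prodShear, h]
  have hζhi : ∀ r, ζ (hi r) = ptEquiv k (e r, !s (e r)) := by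
    intro r
    have : hi r = ptEquiv k (r, true) := by simp [ptEquiv]
    rw [this]
    cases h : s (e r) <;> simp [ζ, flip, Equiv.prodShear, h]
  refine ⟨ζ, ?_, ?_, ?_⟩
  · rw [← isHyper_iff_mem]
    intro i
    refine ⟨e i, ?_⟩
    rw [hζlo, hζhi]
    cases h : s (e i)
    · simp [ptEquiv]
    · simp [ptEquiv, Finset.pair_comm]
  · intro i
    rw [Perm.mul_apply, Perm.mul_apply, hζlo, hζhi, hg]
    exact hg' _
  · intro i j hij
    rw [Perm.mul_apply, Perm.mul_apply, hζlo, hζlo, hg, hg]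
    exact hemono hij

lemma sum_eq_card_mul_sum_Mset (F : Perm (Fin (2 * k)) → ℂ)
    (hF : ∀ σ, ∀ ζ ∈ Hyp k, F (σ * ζ) = F σ) :
    ∑ σ, F σ = (Nat.card (Hyp k) : ℂ) * ∑ τ ∈ Mset k, F τ := by
  classical
  have hM : ∀ τ, τ ∈ Mset k ↔ MProp τ := fun τ => by simp [Mset]
  have hbij : Function.Bijective (fun p : Mset k × Hyp k => (p.1 : Perm (Fin (2 * k))) * p.2) := by
    constructor
    · rintro ⟨⟨τ, hτ⟩, ⟨ζ, hζ⟩⟩ ⟨⟨τ', hτ'⟩, ⟨ζ', hζ'⟩⟩ h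
      simp only at h
      have h1 : τ' = τ * (ζ * ζ'⁻¹) := by rw [← mul_assoc, h]; group
      rw [hM] at hτ hτ'
      have h2 := MProp_unique hτ (h1 ▸ hτ') (mul_mem hζ (inv_mem hζ'))
      rw [h2, mul_one] at h1
      have h3 := mul_inv_eq_one.1 h2
      subst h1 h3
      rfl
    · intro σ
      obtain ⟨ζ, hζ, h⟩ := MProp_exists σ
      exact ⟨⟨⟨σ * ζ, (hM _).2 h⟩, ⟨ζ⁻¹, inv_mem hζ⟩⟩, by simp⟩
  rw [← Equiv.sum_comp (Equiv.ofBijective _ hbij), Fintype.sum_prod_type]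
  simp only [Equiv.ofBijective_apply]
  rw [← Finset.sum_coe_sort (Mset k), Finset.mul_sum]
  refine Finset.sum_congr rfl fun τ _ => ?_
  rw [Finset.sum_congr rfl fun (ζ : Hyp k) _ => hF τ ζ ζ.2]
  simp [Nat.card_eq_fintype_card]

lemma conv_eq_sconv (f g : Perm (Fin (2 * k)) → ℂ) (hf : ∀ σ, ∀ ζ ∈ Hyp k, f (σ * ζ) = f σ)
    (hg : ∀ σ, ∀ ζ ∈ Hyp k, g (ζ * σ) = g σ) :
    conv f g = (Nat.card (Hyp k) : ℂ) • sconv f g := by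
  funext σ
  rw [conv, sum_eq_card_mul_sum_Mset]
  · rfl
  · intro τ ζ hζ
    have e : (τ * ζ)⁻¹ * σ = ζ⁻¹ * (τ⁻¹ * σ) := by group
    rw [hf _ _ hζ, e, hg _ _ (inv_mem hζ)]

lemma TU_conv_comm (n : ℕ) {m : ℕ} (f : Perm (Fin m) → ℂ) :
    conv (fun σ => (n : ℂ) ^ cyc σ) f = conv f (fun σ => (n : ℂ) ^ cyc σ) := by
  have hc : ∀ g σ : Perm (Fin m), (n : ℂ) ^ cyc (g * σ * g⁻¹) = (n : ℂ) ^ cyc σ := fun g σ => by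
    have := colU_conj n σ g
    rw [colU_eq, colU_eq] at this
    exact_mod_cast this
  funext σ
  simp only [conv]
  refine Fintype.sum_equiv ((Equiv.inv _).trans (Equiv.mulRight σ)) _ _ fun τ => ?_
  simp only [Equiv.trans_apply, Equiv.inv_apply, Equiv.coe_mulRight]
  have e : (τ⁻¹ * σ)⁻¹ * σ = σ⁻¹ * τ * σ⁻¹⁻¹ := by group
  rw [e, hc, mul_comm]

/-- `Wg^{A I}(·;n) = T^O(·;n) * Wg^U(·;n)` equals `Wg^O(·;n+1)`. -/
theorem stmt7 (n k : ℕ) (hk : 0 < k) (hnk : 2 * k ≤ n)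
    (WgU : Equiv.Perm (Fin (2 * k)) → ℂ)
    (hWg : conv (fun σ => (n : ℂ) ^ cyc σ) WgU = deltaId)
    (hWg' : conv WgU (fun σ => (n : ℂ) ^ cyc σ) = deltaId)
    (WgO : Equiv.Perm (Fin (2 * k)) → ℂ)
    (hbiO : ∀ (σ ζ ζ' : Equiv.Perm (Fin (2 * k))), IsHyper ζ → IsHyper ζ' →
      WgO (ζ * σ * ζ') = WgO σ)
    (hWgO : sconv (fun σ => ((n : ℂ) + 1) ^ ccount σ) WgO = oneH) :
    (∀ (σ ζ ζ' : Equiv.Perm (Fin (2 * k))), IsHyper ζ → IsHyper ζ' →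
      conv (fun τ => (n : ℂ) ^ ccount τ) WgU (ζ * σ * ζ')
        = conv (fun τ => (n : ℂ) ^ ccount τ) WgU σ) ∧
    sconv (fun σ => ((n : ℂ) + 1) ^ ccount σ) (conv (fun τ => (n : ℂ) ^ ccount τ) WgU)
      = oneH ∧
    conv (fun τ => (n : ℂ) ^ ccount τ) WgU = WgO := by
  have hn : n ≠ 0 := by omega
  set TU : Equiv.Perm (Fin (2 * k)) → ℂ := fun σ => (n : ℂ) ^ cyc σ with hTU
  have hTO1 : (fun σ : Equiv.Perm (Fin (2 * k)) => ((n : ℂ) + 1) ^ ccount σ) = TO k (n + 1) := by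
    funext σ; simp [TO]
  rw [hTO1] at hWgO ⊢
  change (∀ (σ ζ ζ' : Equiv.Perm (Fin (2 * k))), IsHyper ζ → IsHyper ζ' →
      conv (TO k n) WgU (ζ * σ * ζ') = conv (TO k n) WgU σ) ∧
    sconv (TO k (n + 1)) (conv (TO k n) WgU) = oneH ∧ conv (TO k n) WgU = WgO
  have hTOr : ∀ m σ, ∀ ζ ∈ Hyp k, TO k m (σ * ζ) = TO k m σ := fun m σ ζ hζ => by
    rw [TO_eq_colO, TO_eq_colO, colO_mul_right _ _ hζ]
  have hone : IsHyper (1 : Equiv.Perm (Fin (2 * k))) := (isHyper_iff_mem _).2 (one_mem _)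
  have hWl : ∀ σ, ∀ ζ ∈ Hyp k, WgO (ζ * σ) = WgO σ := fun σ ζ hζ => by
    simpa using hbiO σ ζ 1 ((isHyper_iff_mem _).2 hζ) hone
  have hh : (Nat.card (Hyp k) : ℂ) ≠ 0 := by exact_mod_cast (Nat.card_pos (α := Hyp k)).ne.symm
  -- `T^O(n) * T^O(n+1) * Wg^O`, evaluated in two ways.
  have e1 : conv (TO k n) (conv (TO k (n + 1)) WgO) =
      (Nat.card (Hyp k) : ℂ) • (Nat.card (Hyp k) : ℂ) • TO k n := by
    rw [conv_eq_sconv _ _ (hTOr _) hWl, hWgO, conv_smul_right, conv_oneH _ (hTOr n)]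
  have e2 : conv (conv (TO k n) (TO k (n + 1))) WgO =
      (Nat.card (Hyp k) : ℂ) • (Nat.card (Hyp k) : ℂ) • conv TU WgO := by
    rw [TO_conv_TO n hn, conv_smul_left, conv_assoc, oneH_conv _ hWl, conv_smul_right]
  rw [conv_assoc, e1] at e2
  have key : TO k n = conv TU WgO :=
    smul_right_injective _ hh (smul_right_injective _ hh e2)
  have hW : conv (TO k n) WgU = WgO := by
    rw [key, TU_conv_comm, conv_assoc, hWg, conv_deltaId]
  rw [hW]
  exact ⟨hbiO, hWgO, rfl⟩

end WgPaper
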